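/- Let α be a loop in 𝔻 based at d₀. Then α is reduced if and only if f ∘ α is reduced, where f is the shift map. -/

import Mathlib

open scoped unitInterval

noncomputable section

/-- The base segment `B = [0,1] × {0}` of the dyadic arc space. -/
def B2 : Set (ℝ × ℝ) := {p | p.1 ∈ Set.Icc (0:ℝ) 1 ∧ p.2 = 0}

/-- The upper semicircle `𝔻_{n,j}` with center `((2j-1)/2ⁿ, 0)` and radius `1/2ⁿ`. -/
def Dnj (n j : ℕ) : Set (ℝ × ℝ) :=
  {p | (p.1 - (2*(j:ℝ)-1)/2^n)^2 + p.2^2 = (1/2^n)^2 ∧ 0 ≤ p.2}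

/-- The dyadic arc space `𝔻 ⊆ ℝ²`. -/
def Dspace : Set (ℝ × ℝ) :=
  B2 ∪ ⋃ (n : ℕ) (_ : 1 ≤ n) (j : ℕ) (_ : 1 ≤ j) (_ : j ≤ 2^(n-1)), Dnj n j

/-- The dyadic arc space as a topological space. -/
abbrev DD : Type := ↥Dspace

/-- The basepoint `d₀ = (0,0)` of `𝔻`. -/
def d0 : DD := ⟨((0:ℝ), (0:ℝ)), Or.inl ⟨⟨le_refl _, zero_le_one⟩, rfl⟩⟩

theorem d0_mem_B : ((d0 : DD) : ℝ × ℝ) ∈ B2 := ⟨⟨le_refl _, zero_le_one⟩, rfl⟩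

/-- Characterization of the shift map `f : 𝔻 → 𝔻`: it fixes `B` pointwise, and it maps each
point of `𝔻_{n,j}` to the point of `𝔻_{n+1,2j-1} ∪ 𝔻_{n+1,2j}` with the same first
coordinate (and nonnegative second coordinate). -/
def IsShiftMap (f : DD → DD) : Prop :=
  (∀ p : DD, (p : ℝ × ℝ) ∈ B2 → f p = p) ∧
  ∀ n j : ℕ, 1 ≤ n → 1 ≤ j → j ≤ 2^(n-1) → ∀ p : DD, (p : ℝ × ℝ) ∈ Dnj n j →
    ((f p : ℝ × ℝ).1 = (p : ℝ × ℝ).1 ∧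
      ((f p : ℝ × ℝ) ∈ Dnj (n+1) (2*j-1) ∪ Dnj (n+1) (2*j)))

/-- The affine subpath of `α : C([a,b], X)` from `s` to `t`, as a `Path`. -/
def subPath {X : Type*} [TopologicalSpace X] {a b : ℝ} (α : C(Set.Icc a b, X))
    (s t : Set.Icc a b) (hst : (s : ℝ) ≤ (t : ℝ)) : Path (α s) (α t) where
  toFun u := α ⟨(1 - (u : ℝ)) * (s : ℝ) + (u : ℝ) * (t : ℝ),
    ⟨le_trans s.2.1 (by nlinarith [u.2.1, u.2.2]),
     le_trans (by nlinarith [u.2.1, u.2.2]) t.2.2⟩⟩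
  continuous_toFun := by
    apply α.continuous.comp; apply Continuous.subtype_mk; fun_prop
  source' := by apply congrArg α; apply Subtype.ext; simp
  target' := by apply congrArg α; apply Subtype.ext; simp

/-- A path `α : [a,b] → X` is *reduced* if it is constant or if for all `s < t` with
`α(s) = α(t)`, the loop `α|_{[s,t]}` is not null-homotopic. -/
def IsReducedOn {X : Type*} [TopologicalSpace X] {a b : ℝ} (α : C(Set.Icc a b, X)) : Prop :=
  (∃ c, ∀ u, α u = c) ∨
  ∀ (s t : Set.Icc a b) (hst : (s : ℝ) < (t : ℝ)) (he : α s = α t),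
    ¬ ((subPath α s t hst.le).cast rfl he).Homotopic (Path.refl (α s))

/-- Equivalence (`≡`) of paths on intervals: equality up to an increasing homeomorphism of
the parameter intervals. -/
def PathEquivOn {X : Type*} [TopologicalSpace X] {a b c d : ℝ}
    (α : C(Set.Icc a b, X)) (β : C(Set.Icc c d, X)) : Prop :=
  ∃ γ : Set.Icc a b ≃ₜ Set.Icc c d, StrictMono (fun u => γ u) ∧ ∀ u, α u = β (γ u)

/-- Restriction of `α : C([a,b], X)` to the subinterval `[c,d]` (via clamping; for
`[c,d] ⊆ [a,b]` this is the restriction `α|_{[c,d]}`). -/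
def resIcc {X : Type*} [TopologicalSpace X] {a b : ℝ} (α : C(Set.Icc a b, X)) (hab : a ≤ b)
    (c d : ℝ) : C(Set.Icc c d, X) :=
  α.comp ⟨fun u => Set.projIcc a b hab (u : ℝ), continuous_projIcc.comp continuous_subtype_val⟩

/-- The reverse of a path on `[c,d]`. -/
def reverseIcc {X : Type*} [TopologicalSpace X] {c d : ℝ} (β : C(Set.Icc c d, X)) :
    C(Set.Icc c d, X) :=
  ⟨fun u => β ⟨c + d - (u : ℝ), ⟨by linarith [u.2.1, u.2.2], by linarith [u.2.1, u.2.2]⟩⟩,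
    β.continuous.comp (by apply Continuous.subtype_mk; fun_prop)⟩

/-- The path `α : [a,b] → X` reparametrized affinely as a `Path` on `[0,1]`. -/
def toPathIcc {X : Type*} [TopologicalSpace X] {a b : ℝ} (hab : a ≤ b)
    (α : C(Set.Icc a b, X)) :
    Path (α ⟨a, Set.left_mem_Icc.mpr hab⟩) (α ⟨b, Set.right_mem_Icc.mpr hab⟩) :=
  subPath α _ _ hab

/-!
A continuous map which reflects null-homotopic loops preserves and reflects reducedness, because the
condition that a path be reduced only concerns its restrictions to subintervals. The shift map `f`
reflects null-homotopic loops for two reasons.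

* It has a left homotopy inverse `r`. Below an arc `A` lie two smaller arcs, the images of the two
  halves of `A` under `f`. The map `r` sends the left one to `A` followed by the segment back to the
  midpoint of the base of `A`, and the right one to the segment from this midpoint onwards. So
  `r ∘ f` traverses `A` and then a spur of the base, which can be retracted.
* A path between two different points of a fibre of `f` has essential image. One of the two points
  is the top of an arc of some level `n`. Let `G : 𝔻 → ℝ` vanish off the arcs of level `n` and be
  the height on them, scaled to have the value `2π` at their tops. Then `exp (i G)` is constant on
  the fibres of `f`, hence factors through `f`, whereas its lift `G` separates the two points.

The factorizations through `f` are continuous since `𝔻` is the quotient of `I × {0, 1, 1/2, 1/4, …}`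
by the map which sends `(x, ε)` to the point over `x` of the arcs of diameter `ε`.
-/

open Set Topology

section ReflectsNullLoops

variable {X Y E B : Type*} [TopologicalSpace X] [TopologicalSpace Y] [TopologicalSpace E]
  [TopologicalSpace B]

theorem homotopic_refl_map_of_homotopy {f g : C(X, Y)} (H : f.Homotopy g) {p : X} (β : Path p p)
    (hβ : (β.map g.continuous).Homotopic (Path.refl (g p))) :
    (β.map f.continuous).Homotopic (Path.refl (f p)) := by
  set track := Path.Homotopic.Quotient.mk (H.evalAt p)
  have hconj : (Path.Homotopic.Quotient.mk (β.map f.continuous)).trans track = track := by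
    have h := Path.Homotopic.Quotient.eq.2 (Path.Homotopic.map_trans_evalAt H β)
    rw [Path.Homotopic.Quotient.mk_trans, Path.Homotopic.Quotient.mk_trans,
      Path.Homotopic.Quotient.eq.2 hβ] at h
    simpa [track] using h
  refine Path.Homotopic.Quotient.exact ?_
  simpa using congrArg (·.trans track.symm) hconj

theorem eq_of_lift_of_homotopic_refl {π : E → B} (hπ : IsCoveringMap π) (g : C(X, Y))
    (φ : C(Y, B)) (G : C(X, E)) (hG : ∀ x, φ (g x) = π (G x)) {p q : X} (β : Path p q)
    (h : g p = g q) (hβ : ((β.map g.continuous).cast rfl h).Homotopic (Path.refl (g p))) :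
    G p = G q := by
  have hlift : (β.map G.continuous).toContinuousMap.HomotopicRel (.const I (G p)) {0, 1} := by
    rw [hπ.homotopicRel_iff_comp ⟨0, by simp, by simp⟩]
    obtain ⟨K⟩ := hβ.map φ
    exact ⟨ContinuousMap.HomotopyRel.cast K (by ext u; simp [hG]) (by ext u; simp [hG])⟩
  obtain ⟨F⟩ := hlift
  simpa using ((F.eq_fst 0 (x := 1) (by simp)).symm.trans (F.eq_snd 0 (x := 1) (by simp))).symm

/-- `g` reflects null-homotopic loops if every path whose image under `g` is a null-homotopic loop
is itself a null-homotopic loop. Besides the injectivity of `π₁(g)` at all basepoints, this requires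
that no path joining two distinct points of a fibre of `g` has null-homotopic image. -/
def ReflectsNullLoops (g : C(X, Y)) : Prop :=
  ∀ ⦃p q : X⦄ (β : Path p q) (h : g p = g q),
    ((β.map g.continuous).cast rfl h).Homotopic (Path.refl (g p)) →
      ∃ hpq : p = q, (β.cast rfl hpq).Homotopic (Path.refl p)

theorem ReflectsNullLoops.isReducedOn_comp_iff {g : C(X, Y)} (hg : ReflectsNullLoops g) {a b : ℝ}
    (α : C(Icc a b, X)) : IsReducedOn α ↔ IsReducedOn (g.comp α) := by
  constructor
  · rintro (⟨c, hc⟩ | hred)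
    · exact Or.inl ⟨g c, fun u => congrArg g (hc u)⟩
    · refine Or.inr fun s t hst heq hnull => ?_
      obtain ⟨hloop, hnull'⟩ := hg (subPath α s t hst.le) heq hnull
      exact hred s t hst hloop hnull'
  · rintro (⟨c, hc⟩ | hred)
    · rcases isEmpty_or_nonempty (Icc a b) with hempty | hne
      · exact Or.inr fun s => hempty.elim s
      · have hab : a ≤ b := nonempty_Icc.1 (nonempty_coe_sort.1 hne)
        let s : Icc a b := ⟨a, left_mem_Icc.2 hab⟩
        refine Or.inl ⟨α s, fun t => ?_⟩
        have hst : g (α s) = g (α t) := (hc s).trans (hc t).symm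
        have hconst : ((subPath α s t t.2.1).map g.continuous).cast rfl hst =
            Path.refl (g (α s)) := by
          ext u
          exact (hc _).trans (hc s).symm
        obtain ⟨heq, -⟩ := hg (subPath α s t t.2.1) hst (by rw [hconst])
        exact heq.symm
    · exact Or.inr fun s t hst heq hnull => hred s t hst (congrArg g heq) (hnull.map g)

end ReflectsNullLoops

section Cells

theorem continuous_smul_comp_fract_div {T V : Type*} [TopologicalSpace T] [CompactSpace T]
    [NormedAddCommGroup V] [NormedSpace ℝ V] {φ : T → ℝ → V}
    (hφ : Continuous (Function.uncurry φ)) (h01 : ∀ t, φ t 0 = φ t 1) :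
    Continuous fun z : T × ℝ × ℝ => z.2.2 • φ z.1 (Int.fract (z.2.1 / z.2.2)) := by
  rw [continuous_iff_continuousAt]
  rintro ⟨t, x, ε⟩
  rcases eq_or_ne ε 0 with rfl | hε
  · obtain ⟨C, hC⟩ := (isCompact_univ.prod isCompact_Icc :
      IsCompact ((univ : Set T) ×ˢ Icc (0 : ℝ) 1)).exists_bound_of_continuousOn hφ.continuousOn
    have hlim : Filter.Tendsto (fun z : T × ℝ × ℝ => |z.2.2| * C) (𝓝 (t, x, 0)) (𝓝 0) := by
      have hcont : Continuous fun z : T × ℝ × ℝ => |z.2.2| * C := by fun_prop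
      simpa using hcont.tendsto (t, x, 0)
    simp only [ContinuousAt, zero_smul]
    refine squeeze_zero_norm (fun z => ?_) hlim
    rw [norm_smul, Real.norm_eq_abs]
    gcongr
    exact hC (z.1, _) ⟨mem_univ _, Int.fract_nonneg _, (Int.fract_lt_one _).le⟩
  · have hper : Continuous fun w : T × ℝ => φ w.1 (Int.fract w.2) :=
      hφ.continuousOn.comp_fract' h01
    have hdiv : ContinuousAt (fun z : T × ℝ × ℝ => (z.1, z.2.1 / z.2.2)) (t, x, ε) :=
      continuousAt_fst.prodMk (ContinuousAt.div (by fun_prop) (by fun_prop) hε)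
    exact ContinuousAt.smul (by fun_prop) (hper.continuousAt.comp hdiv)

theorem fract_two_mul (z : ℝ) :
    Int.fract (2 * z) = 2 * Int.fract z ∨ Int.fract (2 * z) = 2 * Int.fract z - 1 := by
  have hz := Int.floor_add_fract z
  simp only [Int.fract_eq_iff]
  rcases lt_or_ge (2 * Int.fract z) 1 with h | h
  · exact Or.inl ⟨by linarith [Int.fract_nonneg z], h, 2 * ⌊z⌋, by push_cast; linarith⟩
  · exact Or.inr ⟨by linarith, by linarith [Int.fract_lt_one z], 2 * ⌊z⌋ + 1, by
      push_cast
      linarith⟩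

theorem div_half_eq_two_mul_div (x ε : ℝ) : x / (ε / 2) = 2 * (x / ε) := by
  rw [div_div_eq_mul_div, mul_comm x 2, mul_div_assoc]

/-- The map which replaces every cell `[mε, (m+1)ε] × {0}` of the real line, `m ∈ ℤ`, by a copy
scaled by `ε` of the path `γ` from `(0,0)` to `(1,0)`. -/
def cellMap (γ : ℝ → ℝ × ℝ) (x ε : ℝ) : ℝ × ℝ :=
  (x, 0) + ε • (γ (Int.fract (x / ε)) - (Int.fract (x / ε), 0))

theorem continuous_cellMap {T : Type*} [TopologicalSpace T] [CompactSpace T] {γ : T → ℝ → ℝ × ℝ}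
    (hγ : Continuous (Function.uncurry γ)) (h0 : ∀ t, γ t 0 = (0, 0)) (h1 : ∀ t, γ t 1 = (1, 0)) :
    Continuous fun z : T × ℝ × ℝ => cellMap (γ z.1) z.2.1 z.2.2 := by
  have hdisp : Continuous (Function.uncurry fun t u => γ t u - (u, 0)) :=
    hγ.sub (by fun_prop : Continuous fun z : T × ℝ => (z.2, (0 : ℝ)))
  exact (by fun_prop : Continuous fun z : T × ℝ × ℝ => (z.2.1, (0 : ℝ))).add
    (continuous_smul_comp_fract_div hdisp (by simp [h0, h1]))

theorem cellMap_eq_base {γ : ℝ → ℝ × ℝ} {x ε : ℝ}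
    (h : γ (Int.fract (x / ε)) = (Int.fract (x / ε), 0)) : cellMap γ x ε = (x, 0) := by
  simp [cellMap, h]

theorem cellMap_mul_add {γ : ℝ → ℝ × ℝ} (h0 : γ 0 = (0, 0)) (h1 : γ 1 = (1, 0)) {ε : ℝ}
    (hε : ε ≠ 0) (m : ℕ) {u : ℝ} (hu : u ∈ Icc (0 : ℝ) 1) :
    cellMap γ (ε * (m + u)) ε = ε • (((m : ℝ), 0) + γ u) := by
  rw [cellMap, mul_div_cancel_left₀ _ hε, Int.fract_natCast_add]
  have hsplit : (ε * (m + u), (0 : ℝ)) = ε • (((m : ℝ), (0 : ℝ)) + (u, 0)) := by simp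
  rw [hsplit]
  rcases hu.2.lt_or_eq with hlt | rfl
  · rw [Int.fract_eq_self.2 ⟨hu.1, hlt⟩, ← smul_add, add_assoc, add_sub_cancel]
  · rw [Int.fract_one, h0, h1, sub_self, smul_zero, add_zero]

/-- The upper semicircle of diameter `[0,1] × {0}`, parametrized by the first coordinate. -/
def semicircle (u : ℝ) : ℝ × ℝ := (u, √(u * (1 - u)))

/-- The height over `x` of the upper semicircle whose diameter is the cell `[mε, (m+1)ε]`
containing `x`. -/
def arcHeight (x ε : ℝ) : ℝ := ε * √(Int.fract (x / ε) * (1 - Int.fract (x / ε)))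

theorem cellMap_semicircle (x ε : ℝ) : cellMap semicircle x ε = (x, arcHeight x ε) := by
  ext <;> simp [cellMap, semicircle, arcHeight]

theorem continuous_arcHeight : Continuous fun z : ℝ × ℝ => arcHeight z.1 z.2 := by
  have hcell : Continuous fun z : Unit × ℝ × ℝ => cellMap semicircle z.2.1 z.2.2 :=
    continuous_cellMap (γ := fun _ => semicircle) (by unfold semicircle; fun_prop)
      (by simp [semicircle]) (by simp [semicircle])
  simp only [cellMap_semicircle] at hcell
  exact hcell.snd.comp (by fun_prop : Continuous fun z : ℝ × ℝ => ((), z))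

theorem arcHeight_zero (x : ℝ) : arcHeight x 0 = 0 := by simp [arcHeight]

-- For `ε = 0` both sides hold, because `x / 0 = 0`.
theorem arcHeight_eq_zero_iff {x ε : ℝ} : arcHeight x ε = 0 ↔ Int.fract (x / ε) = 0 := by
  rcases eq_or_ne ε 0 with rfl | hε
  · simp [arcHeight]
  · have hpos : 0 < 1 - Int.fract (x / ε) := sub_pos.2 (Int.fract_lt_one _)
    rw [arcHeight, mul_eq_zero, or_iff_right hε,
      Real.sqrt_eq_zero (mul_nonneg (Int.fract_nonneg _) hpos.le), mul_eq_zero,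
      or_iff_left hpos.ne']

theorem fract_div_eq_zero_or_half {x ε : ℝ} (h : arcHeight x (ε / 2) = 0) :
    Int.fract (x / ε) = 0 ∨ Int.fract (x / ε) = 1 / 2 := by
  rw [arcHeight_eq_zero_iff, div_half_eq_two_mul_div] at h
  rcases fract_two_mul (x / ε) with h2 | h2
  · left; linarith
  · right; linarith

theorem arcHeight_eq_zero_or_half {x ε : ℝ} (h : arcHeight x (ε / 2) = 0) :
    arcHeight x ε = 0 ∨ arcHeight x ε = ε / 2 := by
  rcases fract_div_eq_zero_or_half h with hu | hu
  · exact Or.inl (arcHeight_eq_zero_iff.2 hu)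
  · right
    have hsqrt : √(1 / 2 * (1 - 1 / 2) : ℝ) = 1 / 2 :=
      (Real.sqrt_eq_iff_mul_self_eq_of_pos (by norm_num)).2 (by norm_num)
    rw [arcHeight, hu, hsqrt, mul_one_div]

theorem arcHeight_half_eq_zero {x ε : ℝ} (h : arcHeight x ε = 0) : arcHeight x (ε / 2) = 0 := by
  rw [arcHeight_eq_zero_iff] at h ⊢
  rw [div_half_eq_two_mul_div]
  rcases fract_two_mul (x / ε) with h2 | h2
  · rw [h2, h, mul_zero]
  · linarith [Int.fract_nonneg (2 * (x / ε))]

theorem arcHeight_half_lt {x ε : ℝ} (hε : 0 < ε) (h : arcHeight x ε ≠ 0) :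
    arcHeight x (ε / 2) < arcHeight x ε := by
  have hu : 0 < Int.fract (x / ε) :=
    (Int.fract_nonneg _).lt_of_ne' (mt arcHeight_eq_zero_iff.2 h)
  have hu1 := Int.fract_lt_one (x / ε)
  have hquarter : Int.fract (2 * (x / ε)) * (1 - Int.fract (2 * (x / ε))) <
      2 ^ 2 * (Int.fract (x / ε) * (1 - Int.fract (x / ε))) := by
    rcases fract_two_mul (x / ε) with h2 | h2 <;> rw [h2] <;> nlinarith
  rw [arcHeight, arcHeight, div_half_eq_two_mul_div, div_mul_eq_mul_div, mul_div_assoc]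
  gcongr
  rw [div_lt_iff₀' two_pos]
  calc √(Int.fract (2 * (x / ε)) * (1 - Int.fract (2 * (x / ε))))
      < √(2 ^ 2 * (Int.fract (x / ε) * (1 - Int.fract (x / ε)))) :=
        Real.sqrt_lt_sqrt (mul_nonneg (Int.fract_nonneg _)
          (sub_nonneg.2 (Int.fract_lt_one _).le)) hquarter
    _ = 2 * √(Int.fract (x / ε) * (1 - Int.fract (x / ε))) := by
        rw [Real.sqrt_mul (by norm_num), Real.sqrt_sq two_pos.le]

end Cells
section DyadicArcSpace

/-- The diameter of the semicircles `𝔻_{n+1,j}`. -/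
def arcWidth (n : ℕ) : ℝ := 1 / 2 ^ n

theorem arcWidth_pos (n : ℕ) : 0 < arcWidth n := by
  unfold arcWidth
  positivity

theorem arcWidth_succ (n : ℕ) : arcWidth (n + 1) = arcWidth n / 2 := by
  rw [arcWidth, arcWidth, pow_succ, div_div]

theorem two_pow_mul_arcWidth (n : ℕ) : 2 ^ n * arcWidth n = 1 := by
  simp [arcWidth]

theorem tendsto_arcWidth : Filter.Tendsto arcWidth Filter.atTop (𝓝 0) := by
  have hpow : arcWidth = fun n => (1 / 2 : ℝ) ^ n := funext fun n => (one_div_pow 2 n).symm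
  rw [hpow]
  exact tendsto_pow_atTop_nhds_zero_of_lt_one (by norm_num) (by norm_num)

/-- The diameters of the semicircles in `𝔻`, together with the width `0` which stands for the base
segment. -/
def arcWidths : Set ℝ := insert 0 (range arcWidth)

instance compactSpace_arcWidths : CompactSpace arcWidths :=
  isCompact_iff_compactSpace.1 tendsto_arcWidth.isCompact_insert_range

/-- The passage from a semicircle to the semicircles of the next level. -/
def halve : C(arcWidths, arcWidths) where
  toFun ε := ⟨ε / 2, by
    rcases ε with ⟨_, rfl | ⟨n, rfl⟩⟩
    · exact Or.inl (zero_div 2)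
    · exact Or.inr ⟨n + 1, arcWidth_succ n⟩⟩
  continuous_toFun := by fun_prop

theorem arcWidth_succ_le_half (n : ℕ) : arcWidth (n + 1) ≤ 1 / 2 := by
  have hn : arcWidth n ≤ 1 := div_le_one_of_le₀ (one_le_pow₀ one_le_two) (by positivity)
  rw [arcWidth_succ]
  linarith

theorem min_two_mul_arcWidth_zero : min (2 * arcWidth 0) (2 - 2 * arcWidth 0) = 0 := by
  norm_num [arcWidth]

theorem min_two_mul_arcWidth_succ (n : ℕ) :
    min (2 * arcWidth (n + 1)) (2 - 2 * arcWidth (n + 1)) = arcWidth n := by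
  have hle := arcWidth_succ_le_half n
  rw [min_eq_left (by linarith), arcWidth_succ]
  ring

/-- A left inverse of `halve`. It sends the largest width `1` to `0`, as there is no width `2`. -/
def double : C(arcWidths, arcWidths) where
  toFun ε := ⟨min (2 * ε) (2 - 2 * ε), by
    rcases ε with ⟨_, rfl | ⟨_ | n, rfl⟩⟩
    · exact Or.inl (by norm_num)
    · exact Or.inl min_two_mul_arcWidth_zero
    · exact Or.inr ⟨n, (min_two_mul_arcWidth_succ n).symm⟩⟩
  continuous_toFun := by fun_prop

theorem double_halve (ε : arcWidths) : double (halve ε) = ε := by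
  rcases ε with ⟨_, rfl | ⟨n, rfl⟩⟩
  · simp [double, halve]
  · refine Subtype.ext ?_
    change min (2 * (arcWidth n / 2)) (2 - 2 * (arcWidth n / 2)) = arcWidth n
    rw [← arcWidth_succ, min_two_mul_arcWidth_succ]

theorem halve_double_or_double_eq_zero (ε : arcWidths) :
    halve (double ε) = ε ∨ (double ε : ℝ) = 0 := by
  rcases ε with ⟨_, rfl | ⟨_ | n, rfl⟩⟩
  · right; simp [double]
  · exact Or.inr min_two_mul_arcWidth_zero
  · left
    refine Subtype.ext ?_
    change min (2 * arcWidth (n + 1)) (2 - 2 * arcWidth (n + 1)) / 2 = arcWidth (n + 1)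
    rw [min_two_mul_arcWidth_succ, arcWidth_succ]

theorem antitone_arcHeight_arcWidth (x : ℝ) : Antitone fun n => arcHeight x (arcWidth n) := by
  refine antitone_nat_of_succ_le fun n => ?_
  rw [arcWidth_succ]
  by_cases h : arcHeight x (arcWidth n) = 0
  · rw [arcHeight_half_eq_zero h, h]
  · exact (arcHeight_half_lt (arcWidth_pos n) h).le

theorem arcHeight_arcWidth_lt {x : ℝ} {m n : ℕ} (hmn : m < n)
    (h : arcHeight x (arcWidth m) ≠ 0) :
    arcHeight x (arcWidth n) < arcHeight x (arcWidth m) :=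
  (antitone_arcHeight_arcWidth x (Nat.succ_le_of_lt hmn)).trans_lt <| by
    simp only [Nat.succ_eq_add_one, arcWidth_succ]
    exact arcHeight_half_lt (arcWidth_pos m) h

theorem eq_or_arcHeight_eq_zero {x ε δ : ℝ} (hε : ε ∈ arcWidths) (hδ : δ ∈ arcWidths)
    (h : arcHeight x ε = arcHeight x δ) : ε = δ ∨ arcHeight x ε = 0 := by
  rcases hε with rfl | ⟨m, rfl⟩
  · exact Or.inr (arcHeight_zero x)
  rcases hδ with rfl | ⟨n, rfl⟩
  · exact Or.inr (h.trans (arcHeight_zero x))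
  rcases lt_trichotomy m n with hmn | rfl | hmn
  · exact Or.inr (by_contra fun h0 => (arcHeight_arcWidth_lt hmn h0).ne' h)
  · exact Or.inl rfl
  · exact Or.inr (by_contra fun h0 => (arcHeight_arcWidth_lt hmn (h ▸ h0)).ne h)

theorem exists_eq_arcWidth_mul {x : ℝ} (hx : x ∈ Icc (0 : ℝ) 1) (n : ℕ) :
    ∃ k : ℕ, k < 2 ^ n ∧ ∃ u ∈ Icc (0 : ℝ) 1, x = arcWidth n * (k + u) := by
  rcases hx.2.lt_or_eq with hlt | rfl
  · have hnonneg : 0 ≤ x * 2 ^ n := mul_nonneg hx.1 (by positivity)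
    refine ⟨⌊x * 2 ^ n⌋₊, ?_, x * 2 ^ n - ⌊x * 2 ^ n⌋₊, ⟨?_, ?_⟩, ?_⟩
    · rw [Nat.floor_lt hnonneg, Nat.cast_pow, Nat.cast_ofNat]
      exact mul_lt_of_lt_one_left (by positivity) hlt
    · exact sub_nonneg.2 (Nat.floor_le hnonneg)
    · linarith [Nat.lt_floor_add_one (x * 2 ^ n)]
    · linear_combination -x * two_pow_mul_arcWidth n
  · refine ⟨2 ^ n - 1, Nat.sub_lt (by positivity) one_pos, 1, ⟨zero_le_one, le_rfl⟩, ?_⟩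
    rw [Nat.cast_sub Nat.one_le_two_pow]
    push_cast
    linear_combination -two_pow_mul_arcWidth n

theorem arcWidth_mul_mem_Icc {n k : ℕ} (hk : k < 2 ^ n) {u : ℝ} (hu : u ∈ Icc (0 : ℝ) 1) :
    arcWidth n * ((k : ℝ) + u) ∈ Icc (0 : ℝ) 1 := by
  have hpos := arcWidth_pos n
  have hk' : (k : ℝ) + 1 ≤ 2 ^ n := by exact_mod_cast Nat.succ_le_of_lt hk
  refine ⟨mul_nonneg hpos.le (add_nonneg k.cast_nonneg hu.1), ?_⟩
  calc arcWidth n * (k + u) ≤ arcWidth n * 2 ^ n := by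
        gcongr
        linarith [hu.2]
    _ = 1 := by rw [mul_comm, two_pow_mul_arcWidth]

theorem mem_Dnj_iff {n k : ℕ} {p : ℝ × ℝ} :
    p ∈ Dnj (n + 1) (k + 1) ↔
      ∃ u ∈ Icc (0 : ℝ) 1, arcWidth n • (((k : ℝ), 0) + semicircle u) = p := by
  constructor
  · rintro ⟨hcirc, hp⟩
    have hsq : (2 ^ n * p.2) ^ 2 = (2 ^ n * p.1 - k) * (1 - (2 ^ n * p.1 - k)) := by
      rw [pow_succ] at hcirc
      push_cast at hcirc
      field_simp at hcirc
      linear_combination hcirc / 4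
    refine ⟨2 ^ n * p.1 - k, ⟨?_, ?_⟩, ?_⟩
    · nlinarith [sq_nonneg (2 ^ n * p.2)]
    · nlinarith [sq_nonneg (2 ^ n * p.2)]
    · rw [semicircle, ← hsq, Real.sqrt_sq (by positivity)]
      ext <;> simp [arcWidth]
  · rintro ⟨u, hu, rfl⟩
    have hsq := Real.sq_sqrt (mul_nonneg hu.1 (sub_nonneg.2 hu.2))
    refine ⟨?_, by simp [semicircle, arcWidth]⟩
    simp only [semicircle, arcWidth, Prod.smul_mk, Prod.mk_add_mk, smul_eq_mul, zero_add]
    rw [pow_succ]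
    push_cast
    field_simp
    linear_combination 4 * (2 ^ n) ^ 2 * hsq

theorem smul_add_semicircle (n k : ℕ) {u : ℝ} (hu : u ∈ Icc (0 : ℝ) 1) :
    arcWidth n • (((k : ℝ), 0) + semicircle u) =
      (arcWidth n * (k + u), arcHeight (arcWidth n * (k + u)) (arcWidth n)) := by
  rw [← cellMap_semicircle, cellMap_mul_add (by simp [semicircle]) (by simp [semicircle])
    (arcWidth_pos n).ne' k hu]

theorem snd_eq_arcHeight_of_mem_Dnj {n k : ℕ} {p : ℝ × ℝ} (hp : p ∈ Dnj (n + 1) (k + 1)) :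
    p.2 = arcHeight p.1 (arcWidth n) := by
  obtain ⟨u, hu, rfl⟩ := mem_Dnj_iff.1 hp
  rw [smul_add_semicircle n k hu]

theorem exists_mem_Dnj {x : ℝ} (hx : x ∈ Icc (0 : ℝ) 1) (n : ℕ) :
    ∃ k < 2 ^ n, (x, arcHeight x (arcWidth n)) ∈ Dnj (n + 1) (k + 1) := by
  obtain ⟨k, hk, u, hu, rfl⟩ := exists_eq_arcWidth_mul hx n
  exact ⟨k, hk, mem_Dnj_iff.2 ⟨u, hu, smul_add_semicircle n k hu⟩⟩

theorem mem_Dspace_iff {p : ℝ × ℝ} :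
    p ∈ Dspace ↔ p ∈ B2 ∨ ∃ n, ∃ k < 2 ^ n, p ∈ Dnj (n + 1) (k + 1) := by
  simp only [Dspace, mem_union, mem_iUnion, exists_prop]
  refine or_congr_right ⟨?_, ?_⟩
  · rintro ⟨n, hn, j, hj, hjn, hp⟩
    obtain ⟨m, rfl⟩ := Nat.exists_eq_add_of_le' hn
    obtain ⟨k, rfl⟩ := Nat.exists_eq_add_of_le' hj
    exact ⟨m, k, hjn, hp⟩
  · rintro ⟨n, k, hk, hp⟩
    exact ⟨n + 1, n.succ_pos, k + 1, k.succ_pos, hk, hp⟩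

/-- The unit segment together with the upper semicircle over it: the shape of a cell of `𝔻`. -/
def modelCell : Set (ℝ × ℝ) :=
  {q | q.1 ∈ Icc (0 : ℝ) 1 ∧ (q.2 = 0 ∨ q = semicircle q.1)}

theorem smul_add_mem_Dspace {n k : ℕ} (hk : k < 2 ^ n) {q : ℝ × ℝ} (hq : q ∈ modelCell) :
    arcWidth n • (((k : ℝ), 0) + q) ∈ Dspace := by
  rw [mem_Dspace_iff]
  obtain ⟨hq1, hq2 | hq2⟩ := hq
  · exact Or.inl ⟨arcWidth_mul_mem_Icc hk hq1, by simp [hq2]⟩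
  · exact Or.inr ⟨n, k, hk, mem_Dnj_iff.2 ⟨q.1, hq1, by rw [← hq2]⟩⟩

theorem cellMap_mem_Dspace {γ : ℝ → ℝ × ℝ} (h0 : γ 0 = (0, 0)) (h1 : γ 1 = (1, 0))
    (hγ : MapsTo γ (Icc 0 1) modelCell) {x ε : ℝ} (hx : x ∈ Icc (0 : ℝ) 1) (hε : ε ∈ arcWidths) :
    cellMap γ x ε ∈ Dspace := by
  rcases hε with rfl | ⟨n, rfl⟩
  · exact Or.inl ⟨by simpa [cellMap] using hx, by simp [cellMap]⟩
  · obtain ⟨k, hk, u, hu, rfl⟩ := exists_eq_arcWidth_mul hx n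
    rw [cellMap_mul_add h0 h1 (arcWidth_pos n).ne' k hu]
    exact smul_add_mem_Dspace hk (hγ hu)

theorem mk_arcHeight_mem_Dspace {x ε : ℝ} (hx : x ∈ Icc (0 : ℝ) 1) (hε : ε ∈ arcWidths) :
    (x, arcHeight x ε) ∈ Dspace := by
  rw [← cellMap_semicircle]
  exact cellMap_mem_Dspace (by simp [semicircle]) (by simp [semicircle])
    (fun u hu => ⟨hu, Or.inr rfl⟩) hx hε

/-- The point of the base segment of `𝔻` with first coordinate `x`. -/
def basePoint (x : I) : DD := ⟨(x, 0), Or.inl ⟨x.2, rfl⟩⟩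

/-- The point `(x, arcHeight x ε)` of `𝔻`; this exhibits `𝔻` as a quotient of `I × arcWidths`. -/
def arcPoint (z : I × arcWidths) : DD :=
  ⟨(z.1, arcHeight z.1 z.2), mk_arcHeight_mem_Dspace z.1.2 z.2.2⟩

theorem arcPoint_eq_basePoint {x : I} {ε : arcWidths} (h : arcHeight x ε = 0) :
    arcPoint (x, ε) = basePoint x :=
  Subtype.ext (Prod.ext rfl h)

theorem arcPoint_eq_iff {z w : I × arcWidths} :
    arcPoint z = arcPoint w ↔ z.1 = w.1 ∧ arcHeight z.1 z.2 = arcHeight w.1 w.2 := by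
  simp only [arcPoint, Subtype.mk.injEq, Prod.mk.injEq, Subtype.coe_inj]

theorem continuous_arcHeight_coe :
    Continuous fun z : I × arcWidths => arcHeight z.1 z.2 :=
  continuous_arcHeight.comp
    (by fun_prop : Continuous fun z : I × arcWidths => ((z.1 : ℝ), (z.2 : ℝ)))

theorem continuous_arcPoint : Continuous arcPoint := by
  have hheight := continuous_arcHeight_coe
  unfold arcPoint
  fun_prop

theorem arcPoint_surjective : Function.Surjective arcPoint := by
  rintro ⟨⟨x, y⟩, hp⟩
  rcases mem_Dspace_iff.1 hp with ⟨hx, rfl : y = 0⟩ | ⟨n, k, hk, hmem⟩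
  · exact ⟨(⟨x, hx⟩, ⟨0, Or.inl rfl⟩), Subtype.ext (Prod.ext rfl (arcHeight_zero x))⟩
  · have hx : x ∈ Icc (0 : ℝ) 1 := by
      obtain ⟨u, hu, hxy⟩ := mem_Dnj_iff.1 hmem
      obtain ⟨rfl, -⟩ := Prod.mk.inj ((smul_add_semicircle n k hu).symm.trans hxy)
      exact arcWidth_mul_mem_Icc hk hu
    exact ⟨(⟨x, hx⟩, ⟨arcWidth n, Or.inr ⟨n, rfl⟩⟩),
      Subtype.ext (Prod.ext rfl (snd_eq_arcHeight_of_mem_Dnj hmem).symm)⟩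

theorem isQuotientMap_arcPoint : IsQuotientMap arcPoint :=
  continuous_arcPoint.isClosedMap.isQuotientMap continuous_arcPoint arcPoint_surjective

theorem exists_comp_arcPoint_eq {Y : Type*} [TopologicalSpace Y] (F : C(I × arcWidths, Y))
    (b : I → Y)
    (hb : ∀ (x : I) (ε : arcWidths), arcHeight x ε = 0 → F (x, ε) = b x) :
    ∃ F' : C(DD, Y), ∀ z, F' (arcPoint z) = F z := by
  have hq : IsQuotientMap (⟨arcPoint, continuous_arcPoint⟩ : C(I × arcWidths, DD)) :=
    isQuotientMap_arcPoint
  suffices hF : Function.FactorsThrough F (⟨arcPoint, continuous_arcPoint⟩ : C(_, DD)) from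
    ⟨hq.lift F hF, fun z => DFunLike.congr_fun (hq.lift_comp F hF) z⟩
  rintro ⟨x, ε⟩ ⟨y, δ⟩ h
  obtain ⟨rfl : x = y, hheight : arcHeight x ε = arcHeight x δ⟩ := arcPoint_eq_iff.1 h
  rcases eq_or_arcHeight_eq_zero ε.2 δ.2 hheight with hεδ | hzero
  · rw [Subtype.ext hεδ]
  · rw [hb x ε hzero, hb x δ (hheight ▸ hzero)]

end DyadicArcSpace

section ShiftMap

/-- A homotopy `t ↦ stretch t` of paths from `(0,0)` to `(1,0)` in `modelCell`, starting at the
semicircle. The path `stretch t` runs through the semicircle with speed `1 + 2 * t`, then returns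
along the segment until it meets the point which moves with unit speed, and finally follows that
point. So `stretch 1` is at `(1/2, 0)` at time `1/2`. -/
def stretch (t u : ℝ) : ℝ × ℝ :=
  (max u (min ((1 + 2 * t) * u) (2 - (1 + 2 * t) * u)),
    √((1 + 2 * t) * u * (1 - (1 + 2 * t) * u)))

theorem stretch_apply_zero (t : ℝ) : stretch t 0 = (0, 0) := by
  simp [stretch]

theorem stretch_apply_one {t : ℝ} (ht : 0 ≤ t) : stretch t 1 = (1, 0) := by
  refine Prod.ext (max_eq_left ((min_le_right _ _).trans (by linarith))) ?_
  exact Real.sqrt_eq_zero_of_nonpos (by nlinarith)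

theorem stretch_zero_apply {u : ℝ} (hu : u ≤ 1) : stretch 0 u = semicircle u := by
  have hmin : min u (2 - u) = u := min_eq_left (by linarith)
  simp [stretch, semicircle, hmin]

theorem stretch_one_apply_half : stretch 1 (1 / 2) = (1 / 2, 0) := by
  refine Prod.ext ?_ (Real.sqrt_eq_zero_of_nonpos (by norm_num))
  norm_num [stretch]

theorem continuous_stretch : Continuous (Function.uncurry stretch) := by
  unfold stretch Function.uncurry
  fun_prop

theorem mapsTo_stretch {t : ℝ} (ht : 0 ≤ t) : MapsTo (stretch t) (Icc 0 1) modelCell := by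
  rintro u ⟨hu0, hu1⟩
  have hle : u ≤ (1 + 2 * t) * u := by nlinarith
  refine ⟨⟨hu0.trans (le_max_left _ _), max_le hu1 ?_⟩, ?_⟩
  · rcases le_total ((1 + 2 * t) * u) 1 with h | h
    · exact (min_le_left _ _).trans h
    · exact (min_le_right _ _).trans (by linarith)
  · rcases le_total ((1 + 2 * t) * u) 1 with h | h
    · right
      have hfst : max u (min ((1 + 2 * t) * u) (2 - (1 + 2 * t) * u)) = (1 + 2 * t) * u := by
        rw [min_eq_left (by linarith), max_eq_right hle]
      simp only [stretch, semicircle, hfst]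
    · left
      exact Real.sqrt_eq_zero_of_nonpos
        (mul_nonpos_of_nonneg_of_nonpos (by linarith) (by linarith))

theorem exists_curry_cellMap_stretch : ∃ H : C(DD, C(I, DD)), ∀ (t x : I) (ε : arcWidths),
    (H (arcPoint (x, ε)) t : ℝ × ℝ) = cellMap (stretch t) x ε := by
  have hmem : ∀ w : (I × arcWidths) × I, cellMap (stretch w.2) w.1.1 w.1.2 ∈ Dspace := fun w =>
    cellMap_mem_Dspace (stretch_apply_zero _) (stretch_apply_one w.2.2.1)
      (mapsTo_stretch w.2.2.1) w.1.1.2 w.1.2.2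
  have hcell : Continuous fun w : (I × arcWidths) × I =>
      cellMap (stretch w.2) w.1.1 w.1.2 :=
    (continuous_cellMap (γ := fun t : I => stretch t)
      (continuous_stretch.comp (by fun_prop : Continuous fun w : I × ℝ => ((w.1 : ℝ), w.2)))
      (fun t => stretch_apply_zero t) (fun t => stretch_apply_one t.2.1)).comp
      (by fun_prop : Continuous fun w : (I × arcWidths) × I => (w.2, (w.1.1 : ℝ), (w.1.2 : ℝ)))
  let M : C((I × arcWidths) × I, DD) := ⟨fun w => ⟨_, hmem w⟩, hcell.subtype_mk _⟩
  obtain ⟨H, hH⟩ := exists_comp_arcPoint_eq M.curry (fun x => .const I (basePoint x)) <| by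
    intro x ε hzero
    ext1 t
    refine Subtype.ext (cellMap_eq_base ?_)
    rw [arcHeight_eq_zero_iff.1 hzero, stretch_apply_zero]
  exact ⟨H, fun t x ε => by rw [hH]; rfl⟩

/-- A bump function which selects the single width `arcWidth n` among `arcWidths`. -/
def levelBump (n : ℕ) (ε : ℝ) : ℝ := max 0 (1 - 2 * |2 ^ n * ε - 1|)

theorem levelBump_arcWidth (n : ℕ) : levelBump n (arcWidth n) = 1 := by
  simp [levelBump, two_pow_mul_arcWidth]

theorem levelBump_eq_zero {n : ℕ} {ε : ℝ} (hε : ε ∈ arcWidths) (hne : ε ≠ arcWidth n) :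
    levelBump n ε = 0 := by
  suffices h : 2 ^ n * ε ≤ 1 / 2 ∨ 2 ≤ 2 ^ n * ε by
    refine max_eq_left ?_
    rcases h with h | h
    · linarith [neg_le_abs (2 ^ n * ε - 1)]
    · linarith [le_abs_self (2 ^ n * ε - 1)]
  rcases hε with rfl | ⟨m, rfl⟩
  · left; norm_num
  rcases lt_trichotomy m n with hmn | rfl | hmn
  · right
    calc (2 : ℝ) = 2 ^ (m + 1) * arcWidth m := by
          rw [pow_succ', mul_assoc, two_pow_mul_arcWidth, mul_one]
      _ ≤ 2 ^ n * arcWidth m := by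
          gcongr
          · exact (arcWidth_pos m).le
          · exact one_le_two
          · exact hmn
  · exact absurd rfl hne
  · left
    have hle : (2 : ℝ) ^ (n + 1) * arcWidth m ≤ 2 ^ m * arcWidth m := by
      gcongr
      · exact (arcWidth_pos m).le
      · exact one_le_two
      · exact hmn
    rw [two_pow_mul_arcWidth, pow_succ'] at hle
    linarith

theorem levelBump_mul_eq_zero_or_one (n : ℕ) {ε : ℝ} (hε : ε ∈ arcWidths) :
    levelBump n ε * (2 ^ n * ε) = 0 ∨ levelBump n ε * (2 ^ n * ε) = 1 := by
  by_cases h : ε = arcWidth n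
  · right; rw [h, levelBump_arcWidth, two_pow_mul_arcWidth, one_mul]
  · left; rw [levelBump_eq_zero hε h, zero_mul]

-- A semicircle of diameter `ε` has height `ε / 2`, so `4π` gives the value `2π` at its top.
theorem exists_levelBump_mul_arcHeight (n : ℕ) : ∃ G : C(DD, ℝ), ∀ (x : I) (ε : arcWidths),
    G (arcPoint (x, ε)) = 4 * Real.pi * (levelBump n ε * (2 ^ n * arcHeight x ε)) := by
  have hheight := continuous_arcHeight_coe
  let F : C(I × arcWidths, ℝ) :=
    ⟨fun z => 4 * Real.pi * (levelBump n z.2 * (2 ^ n * arcHeight z.1 z.2)), by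
      unfold levelBump
      fun_prop⟩
  obtain ⟨G, hG⟩ := exists_comp_arcPoint_eq F 0 fun x ε hzero => by simp [F, hzero]
  exact ⟨G, fun x ε => hG (x, ε)⟩

variable {f : DD → DD}

theorem IsShiftMap.apply_arcPoint (hs : IsShiftMap f) (x : I) (ε : arcWidths) :
    f (arcPoint (x, ε)) = arcPoint (x, halve ε) := by
  rcases ε with ⟨_, rfl | ⟨n, rfl⟩⟩
  · have hzero : arcHeight x (0 / 2) = 0 := arcHeight_half_eq_zero (arcHeight_zero x)
    rw [arcPoint_eq_basePoint (arcHeight_zero x), arcPoint_eq_basePoint hzero]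
    exact hs.1 _ ⟨x.2, rfl⟩
  · obtain ⟨k, hk, hmem⟩ := exists_mem_Dnj x.2 n
    obtain ⟨hfst, hnext⟩ := hs.2 (n + 1) (k + 1) n.succ_pos k.succ_pos hk
      (arcPoint (x, ⟨arcWidth n, Or.inr ⟨n, rfl⟩⟩)) hmem
    have hsnd := hnext.elim snd_eq_arcHeight_of_mem_Dnj snd_eq_arcHeight_of_mem_Dnj
    rw [hfst, arcWidth_succ] at hsnd
    exact Subtype.ext (Prod.ext hfst hsnd)

theorem IsShiftMap.continuous (hs : IsShiftMap f) : Continuous f := by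
  rw [isQuotientMap_arcPoint.continuous_iff]
  have hcomp : f ∘ arcPoint = arcPoint ∘ Prod.map id halve :=
    funext fun z => hs.apply_arcPoint z.1 z.2
  rw [hcomp]
  exact continuous_arcPoint.comp (by fun_prop)

theorem IsShiftMap.exists_comp_eq (hs : IsShiftMap f) {Y : Type*} [TopologicalSpace Y]
    (g : C(DD, Y)) (hg : ∀ p, (f p : ℝ × ℝ) ∈ B2 → g p = g (f p)) :
    ∃ g' : C(DD, Y), ∀ p, g' (f p) = g p := by
  let F : C(I × arcWidths, Y) := g.comp ⟨fun z => arcPoint (z.1, double z.2),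
    continuous_arcPoint.comp (by fun_prop)⟩
  obtain ⟨g', hg'⟩ := exists_comp_arcPoint_eq F (fun x => g (basePoint x)) <| by
    intro x ε hzero
    change g (arcPoint (x, double ε)) = g (basePoint x)
    rcases halve_double_or_double_eq_zero ε with hε | hε
    · have hf : f (arcPoint (x, double ε)) = basePoint x := by
        rw [hs.apply_arcPoint, hε, arcPoint_eq_basePoint hzero]
      rw [hg _ (by rw [hf]; exact ⟨x.2, rfl⟩), hf]
    · rw [arcPoint_eq_basePoint (by rw [hε, arcHeight_zero])]
  refine ⟨g', fun p => ?_⟩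
  obtain ⟨⟨x, ε⟩, rfl⟩ := arcPoint_surjective p
  rw [hs.apply_arcPoint, hg']
  change g (arcPoint (x, double (halve ε))) = _
  rw [double_halve]

theorem IsShiftMap.exists_left_homotopy_inverse (hs : IsShiftMap f) :
    ∃ r : C(DD, DD), (ContinuousMap.id DD).Homotopic (r.comp ⟨f, hs.continuous⟩) := by
  obtain ⟨H, hH⟩ := exists_curry_cellMap_stretch
  have hH0 : ∀ p, H p 0 = p := fun p => by
    obtain ⟨⟨x, ε⟩, rfl⟩ := arcPoint_surjective p
    refine Subtype.ext ((hH 0 x ε).trans ?_)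
    rw [cellMap, Icc.coe_zero, stretch_zero_apply (Int.fract_lt_one _).le]
    exact cellMap_semicircle x ε
  have hH1 : ∀ (x : I) (ε : arcWidths), arcHeight x (ε / 2) = 0 →
      H (arcPoint (x, ε)) 1 = basePoint x := fun x ε h => by
    refine Subtype.ext ((hH 1 x ε).trans (cellMap_eq_base ?_))
    rw [Icc.coe_one]
    rcases fract_div_eq_zero_or_half h with hfract | hfract
    · rw [hfract, stretch_apply_zero]
    · rw [hfract, stretch_one_apply_half]
  obtain ⟨r, hr⟩ := hs.exists_comp_eq ⟨fun p => H p 1, by fun_prop⟩ <| by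
    intro p hp
    obtain ⟨⟨x, ε⟩, rfl⟩ := arcPoint_surjective p
    rw [hs.apply_arcPoint] at hp ⊢
    exact (hH1 x ε hp.2).trans (hH1 x (halve ε) (arcHeight_half_eq_zero hp.2)).symm
  exact ⟨r, ⟨{
    toFun := fun w => H w.2 w.1
    continuous_toFun := by fun_prop
    map_zero_left := hH0
    map_one_left := fun p => (hr p).symm }⟩⟩

theorem IsShiftMap.exists_circle_lift (hs : IsShiftMap f) (n : ℕ) :
    ∃ (G : C(DD, ℝ)) (φ : C(DD, Circle)), (∀ p, φ (f p) = Circle.exp (G p)) ∧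
      ∀ (x : I) (ε : arcWidths),
        G (arcPoint (x, ε)) = 4 * Real.pi * (levelBump n ε * (2 ^ n * arcHeight x ε)) := by
  obtain ⟨G, hG⟩ := exists_levelBump_mul_arcHeight n
  obtain ⟨φ, hφ⟩ := hs.exists_comp_eq ((Circle.exp : C(ℝ, Circle)).comp G) <| by
    intro p hp
    obtain ⟨⟨x, ε⟩, rfl⟩ := arcPoint_surjective p
    rw [hs.apply_arcPoint] at hp ⊢
    have hhalf : arcHeight x (halve ε) = 0 := hp.2
    have hleft : Circle.exp (G (arcPoint (x, ε))) = 1 := by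
      rw [hG]
      rcases arcHeight_eq_zero_or_half hhalf with h | h
      · simp [h]
      · rw [h, ← mul_div_assoc, ← mul_div_assoc]
        rcases levelBump_mul_eq_zero_or_one n ε.2 with hbump | hbump
        · simp [hbump]
        · rw [hbump, ← Circle.exp_two_pi]
          congr 1
          ring
    rw [ContinuousMap.comp_apply, ContinuousMap.comp_apply, hleft, hG, hhalf]
    simp
  exact ⟨G, φ, hφ, hG⟩

theorem IsShiftMap.exists_lift_ne_of_arcHeight_ne_zero (hs : IsShiftMap f) {x : I}
    {ε δ : arcWidths} (hne : ε ≠ δ) (hε : arcHeight x ε ≠ 0) :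
    ∃ (G : C(DD, ℝ)) (φ : C(DD, Circle)), (∀ p, φ (f p) = Circle.exp (G p)) ∧
      G (arcPoint (x, ε)) ≠ G (arcPoint (x, δ)) := by
  rcases ε with ⟨_, rfl | ⟨n, rfl⟩⟩
  · exact absurd (arcHeight_zero x) hε
  obtain ⟨G, φ, hφ, hG⟩ := hs.exists_circle_lift n
  refine ⟨G, φ, hφ, ?_⟩
  have hδ : levelBump n δ = 0 := levelBump_eq_zero δ.2 fun h => hne (Subtype.ext h.symm)
  rw [hG, hG, hδ, levelBump_arcWidth]
  simp [hε, Real.pi_ne_zero]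

theorem IsShiftMap.exists_lift_ne (hs : IsShiftMap f) {p q : DD} (h : f p = f q) (hne : p ≠ q) :
    ∃ (G : C(DD, ℝ)) (φ : C(DD, Circle)), (∀ r, φ (f r) = Circle.exp (G r)) ∧ G p ≠ G q := by
  obtain ⟨⟨x, ε⟩, rfl⟩ := arcPoint_surjective p
  obtain ⟨⟨y, δ⟩, rfl⟩ := arcPoint_surjective q
  rw [hs.apply_arcPoint, hs.apply_arcPoint, arcPoint_eq_iff] at h
  obtain rfl : x = y := h.1
  have hεδ : ε ≠ δ := fun h => hne (h ▸ rfl)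
  by_cases hε : arcHeight x ε = 0
  · have hδ : arcHeight x δ ≠ 0 := fun hδ => hne (arcPoint_eq_iff.2 ⟨rfl, hε.trans hδ.symm⟩)
    obtain ⟨G, φ, hφ, hG⟩ := hs.exists_lift_ne_of_arcHeight_ne_zero hεδ.symm hδ
    exact ⟨G, φ, hφ, hG.symm⟩
  · exact hs.exists_lift_ne_of_arcHeight_ne_zero hεδ hε

theorem IsShiftMap.reflectsNullLoops (hs : IsShiftMap f) :
    ReflectsNullLoops (⟨f, hs.continuous⟩ : C(DD, DD)) := by
  intro p q β h hnull
  have hpq : p = q := by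
    by_contra hne
    obtain ⟨G, φ, hφ, hG⟩ := hs.exists_lift_ne h hne
    exact hG (eq_of_lift_of_homotopic_refl Circle.isCoveringMap_exp _ φ G hφ β h hnull)
  subst hpq
  obtain ⟨r, ⟨H⟩⟩ := hs.exists_left_homotopy_inverse
  exact ⟨rfl, homotopic_refl_map_of_homotopy H β (hnull.map r)⟩

end ShiftMap

theorem statement7_general {f : DD → DD} (hs : IsShiftMap f) {a b : ℝ} (α : C(Icc a b, DD)) :
    IsReducedOn α ↔ IsReducedOn ((⟨f, hs.continuous⟩ : C(DD, DD)).comp α) :=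
  hs.reflectsNullLoops.isReducedOn_comp_iff α

/-- A loop `α` in `𝔻` based at `d₀` is reduced if and only if `f ∘ α` is
reduced, where `f` is the shift map. -/
theorem statement7 (f : DD → DD) (hf : Continuous f) (hs : IsShiftMap f)
    (α : Path d0 d0) :
    IsReducedOn α.toContinuousMap ↔ IsReducedOn (α.map hf).toContinuousMap :=
  statement7_general hs α.toContinuousMap

end
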